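/- For every m ≥ 2, the group homomorphism B(Ã_{m−1}) → Aut(F_{m+1}) sending s_i to σ_i for all i ∈ ℤ/m is injective; that is, the affine braid group B(Ã_{m−1}) acts faithfully on the free group F_{m+1} via the automorphisms σ_i. -/

import Mathlib

/-- The braid relation word `s_i s_j s_i (s_j s_i s_j)⁻¹` in a free group. -/
def braidRelWord {I : Type*} (i j : I) : FreeGroup I :=
  FreeGroup.of i * FreeGroup.of j * FreeGroup.of i *
    (FreeGroup.of j * FreeGroup.of i * FreeGroup.of j)⁻¹

/-- The commutation relation word `s_i s_j (s_j s_i)⁻¹` in a free group. -/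
def commRelWord {I : Type*} (i j : I) : FreeGroup I :=
  FreeGroup.of i * FreeGroup.of j * (FreeGroup.of j * FreeGroup.of i)⁻¹

/-- The defining relations of the affine braid group `B(Ã_{n-1})`: for `n ≥ 3` the braid
relations `s_i s_{i+1} s_i = s_{i+1} s_i s_{i+1}` (`i ∈ ℤ/n`) and the commutation relations
`s_i s_j = s_j s_i` for `i - j ≠ ±1`; for `n = 2` there are no relations, so that
`B(Ã_1)` is the free group on two generators. -/
def affineBraidRels (n : ℕ) : Set (FreeGroup (ZMod n)) :=
  if n ≤ 2 then ∅
  else {r | (∃ i : ZMod n, r = braidRelWord i (i + 1)) ∨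
            (∃ i j : ZMod n, i - j ≠ 1 ∧ i - j ≠ -1 ∧ r = commRelWord i j)}

/-- The affine braid group `B(Ã_{n-1})`. -/
abbrev AffineBraidGroup (n : ℕ) := PresentedGroup (affineBraidRels n)

/-- The generator `s_i` of the affine braid group `B(Ã_{n-1})`, `i ∈ ℤ/n`. -/
def affineBraidGen (n : ℕ) (i : ZMod n) : AffineBraidGroup n := PresentedGroup.of i

/-- The free group `F_{m+1}` on generators `y_0, …, y_{m−1}, y`: `y_j = of (some j)` for
`j ∈ ℤ/m` and `y = of none`. The map `σ_i` on generators: `σ_i(y_i) = y_{i+1}`,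
`σ_i(y_{i+1}) = y_{i+1}⁻¹ y_i y_{i+1}`, `σ_i(y_j) = y_j` for `j ≠ i, i+1`, `σ_i(y) = y`. -/
def sigmaMap (m : ℕ) (i : ZMod m) :
    Option (ZMod m) → FreeGroup (Option (ZMod m))
  | none => FreeGroup.of none
  | some j =>
    if j = i then FreeGroup.of (some (i + 1))
    else if j = i + 1 then
      (FreeGroup.of (some (i + 1)))⁻¹ * FreeGroup.of (some i) * FreeGroup.of (some (i + 1))
    else FreeGroup.of (some j)

/-- The endomorphism `σ_i` of the free group `F_{m+1}` induced by `sigmaMap`. -/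
def sigmaHom (m : ℕ) (i : ZMod m) :
    FreeGroup (Option (ZMod m)) →* FreeGroup (Option (ZMod m)) :=
  FreeGroup.lift (sigmaMap m i)


namespace BraidAction

open FreeGroup (of)

/-! ### Commuting elements of free groups -/

theorem exists_zpow_of_commute {α : Type*} {a b : FreeGroup α} (h : Commute a b) :
    ∃ (z : FreeGroup α) (i j : ℤ), a = z ^ i ∧ b = z ^ j := by
  classical
  let K : Subgroup (FreeGroup α) := Subgroup.closure {a, b}
  have hcomm : ∀ x y : K, x * y = y * x := by
    have hK : ∀ x ∈ ({a, b} : Set (FreeGroup α)), ∀ y ∈ ({a, b} : Set (FreeGroup α)),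
        x * y = y * x := by
      rintro x (rfl | rfl) y (rfl | rfl)
      exacts [rfl, h.eq, h.symm.eq, rfl]
    have := Subgroup.isMulCommutative_closure hK
    exact fun x y => mul_comm' x y
  let e := IsFreeGroup.mulEquiv K
  have hsub : Subsingleton (IsFreeGroup.Generators K) := by
    refine ⟨fun p q => ?_⟩
    have hpq : (of p * of q : FreeGroup (IsFreeGroup.Generators K)) = of q * of p :=
      e.injective (by rw [map_mul, map_mul, hcomm])
    have := congrArg FreeGroup.toWord hpq
    simp only [FreeGroup.toWord_mul, FreeGroup.toWord_of] at this
    simp [FreeGroup.reduce] at this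
    exact this.1
  have hcyc : ∃ z : FreeGroup (IsFreeGroup.Generators K), ∀ w, w ∈ Subgroup.zpowers z := by
    rcases isEmpty_or_nonempty (IsFreeGroup.Generators K) with hE | ⟨⟨p⟩⟩
    · exact ⟨1, fun w => by rw [Subsingleton.elim w 1]; exact one_mem _⟩
    · refine ⟨of p, fun w => ?_⟩
      induction w using FreeGroup.induction_on with
      | C1 => exact one_mem _
      | of q => rw [Subsingleton.elim q p]; exact Subgroup.mem_zpowers _
      | inv_of q hq => exact inv_mem hq
      | mul x y hx hy => exact mul_mem hx hy
  obtain ⟨z, hz⟩ := hcyc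
  have ha : a ∈ K := Subgroup.subset_closure (by simp)
  have hb : b ∈ K := Subgroup.subset_closure (by simp)
  obtain ⟨i, hi⟩ := hz (e.symm ⟨a, ha⟩)
  obtain ⟨j, hj⟩ := hz (e.symm ⟨b, hb⟩)
  refine ⟨(e z : K), i, j, ?_, ?_⟩
  · have := congrArg (fun t => ((e t : K) : FreeGroup α)) hi
    simpa using this.symm
  · have := congrArg (fun t => ((e t : K) : FreeGroup α)) hj
    simpa using this.symm

theorem map_eq_one_of_commute {α M : Type*} [Group M] [IsMulTorsionFree M]
    (f : FreeGroup α →* M) {a b : FreeGroup α} (h : Commute a b) (hb : b ≠ 1)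
    (hf : f b = 1) : f a = 1 := by
  obtain ⟨z, i, j, rfl, rfl⟩ := exists_zpow_of_commute h
  have hj : j ≠ 0 := by rintro rfl; simp at hb
  have hz : f z = 1 := by
    rw [map_zpow] at hf
    exact (IsMulTorsionFree.zpow_eq_one_iff_left hj).1 hf
  simp [hz]

/-! ### Braid relations and relations of type `B` -/

variable {G : Type*} [Group G]

/-- The elements `s 0, …, s (n - 1)` satisfy the braid relations of type `A`. -/
structure IsBraidChain (s : ℕ → G) (n : ℕ) : Prop where
  braid : ∀ i, i + 1 < n → s i * s (i + 1) * s i = s (i + 1) * s i * s (i + 1)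
  comm : ∀ i j, i + 1 < j → j < n → Commute (s i) (s j)

/-- The elements `τ, s 0, …, s (n - 1)` satisfy the braid relations of type `B`. -/
structure IsTypeBChain (s : ℕ → G) (τ : G) (n : ℕ) : Prop extends IsBraidChain s n where
  comm_base : ∀ i, i + 1 < n → Commute (s (i + 1)) τ
  four : 0 < n → s 0 * τ * s 0 * τ = τ * s 0 * τ * s 0

/-- The subgroup generated by `s 0, …, s (n - 1)`. -/
def chainSubgroup (s : ℕ → G) (n : ℕ) : Subgroup G :=
  Subgroup.closure (s '' Set.Iio n)

theorem mem_chainSubgroup (s : ℕ → G) {n i : ℕ} (hi : i < n) : s i ∈ chainSubgroup s n :=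
  Subgroup.subset_closure ⟨i, hi, rfl⟩

/-- The successive conjugates of `τ` by `s 0`, `s 1 * s 0`, `s 2 * s 1 * s 0`, …. -/
def meridian (s : ℕ → G) (τ : G) : ℕ → G
  | 0 => τ
  | k + 1 => s k * meridian s τ k * (s k)⁻¹

/-- The homomorphism from a free group of rank `n + 1` given by the first `n + 1` meridians. -/
def meridianHom (s : ℕ → G) (τ : G) (n : ℕ) : FreeGroup (Fin (n + 1)) →* G :=
  FreeGroup.lift fun k => meridian s τ k

theorem meridian_mem_range (s : ℕ → G) (τ : G) {n k : ℕ} (hk : k ≤ n) :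
    meridian s τ k ∈ (meridianHom s τ n).range :=
  ⟨of ⟨k, Nat.lt_succ_of_le hk⟩, by simp [meridianHom]⟩

theorem four_relation_conj {A s t : G} (h : t * A * t * A = A * t * A * t) (hA : s * A = A * s)
    (hst : t * s * t = s * t * s) :
    s * (t * A * t⁻¹) * s * (t * A * t⁻¹) = (t * A * t⁻¹) * s * (t * A * t⁻¹) * s := by
  have h1 : t⁻¹ * s * t = s * t * s⁻¹ := by
    rw [eq_mul_inv_iff_mul_eq, mul_assoc, mul_assoc, inv_mul_eq_iff_eq_mul]
    simp only [← mul_assoc, hst]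
  have h2 : s⁻¹ * t⁻¹ * s = t * s⁻¹ * t⁻¹ := by
    have := congrArg (fun g => s⁻¹ * t⁻¹ * g * s⁻¹ * t⁻¹) hst
    simp only [mul_assoc, inv_mul_cancel_left, mul_inv_cancel, mul_one] at this ⊢
    exact this.symm
  have h3 : A * s⁻¹ = s⁻¹ * A := by
    rw [mul_inv_eq_iff_eq_mul, mul_assoc, ← hA, inv_mul_cancel_left]
  calc s * (t * A * t⁻¹) * s * (t * A * t⁻¹)
      = s * t * A * (t⁻¹ * s * t) * A * t⁻¹ := by group
    _ = s * t * (A * s) * t * (s⁻¹ * A) * t⁻¹ := by rw [h1]; group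
    _ = (s * t * s) * A * t * A * s⁻¹ * t⁻¹ := by rw [← hA, ← h3]; group
    _ = t * s * (t * A * t * A) * s⁻¹ * t⁻¹ := by rw [← hst]; group
    _ = t * s * A * t * A * (t * s⁻¹ * t⁻¹) := by rw [h]; group
    _ = t * (s * A) * t * (A * s⁻¹) * t⁻¹ * s := by rw [← h2]; group
    _ = t * A * (s * t * s⁻¹) * A * t⁻¹ * s := by rw [hA, h3]; group
    _ = (t * A * t⁻¹) * s * (t * A * t⁻¹) * s := by rw [← h1]; group

namespace IsTypeBChain

variable {s : ℕ → G} {τ : G} {n : ℕ}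

theorem commute_meridian_of_lt (h : IsTypeBChain s τ n) {k j : ℕ} (hkj : k < j) (hj : j < n) :
    Commute (s j) (meridian s τ k) := by
  induction k with
  | zero =>
    obtain ⟨i, rfl⟩ := Nat.exists_eq_add_of_lt hkj
    simpa [meridian] using h.comm_base i (by omega)
  | succ k ih =>
    have h1 : Commute (s j) (s k) := (h.comm k j (by omega) hj).symm
    exact (h1.mul_right (ih (by omega))).mul_right h1.inv_right

theorem commute_meridian_of_gt (h : IsTypeBChain s τ n) {k j : ℕ} (hkj : j + 1 < k)
    (hk : k ≤ n) : Commute (s j) (meridian s τ k) := by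
  induction k with
  | zero => omega
  | succ k ih =>
    rcases Nat.lt_or_ge (j + 1) k with hlt | hge
    · have h1 : Commute (s j) (s k) := h.comm j k hlt (by omega)
      exact (h1.mul_right (ih hlt (by omega))).mul_right h1.inv_right
    · obtain rfl : k = j + 1 := by omega
      have hb := h.braid j (by omega)
      have hc := h.commute_meridian_of_lt (k := j) (j := j + 1) (by omega) (by omega)
      have hs : s j * (s (j + 1) * s j) = (s (j + 1) * s j) * s (j + 1) := by
        simpa only [mul_assoc] using hb
      have e : meridian s τ (j + 1 + 1) =
          (s (j + 1) * s j) * meridian s τ j * (s (j + 1) * s j)⁻¹ := by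
        simp only [meridian]; group
      have e2 : s j = (s (j + 1) * s j) * s (j + 1) * (s (j + 1) * s j)⁻¹ := by
        rw [← hs]; group
      rw [e]
      conv => congr; · rw [e2]
      exact (Commute.conj_iff _).2 hc

theorem four_meridian (h : IsTypeBChain s τ n) {k : ℕ} (hk : k < n) :
    s k * meridian s τ k * s k * meridian s τ k =
      meridian s τ k * s k * meridian s τ k * s k := by
  induction k with
  | zero => exact h.four hk
  | succ k ih =>
    exact four_relation_conj (ih (by omega))
      (h.commute_meridian_of_lt (Nat.lt_succ_self k) hk).eq (h.braid k hk)

theorem conj_meridian_succ (h : IsTypeBChain s τ n) {k : ℕ} (hk : k < n) :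
    s k * meridian s τ (k + 1) * (s k)⁻¹ =
      (meridian s τ (k + 1))⁻¹ * meridian s τ k * meridian s τ (k + 1) := by
  have h4 := h.four_meridian hk
  simp only [meridian]
  generalize meridian s τ k = A at *
  generalize s k = t at *
  have h5 : t * A * t⁻¹ = A⁻¹ * t⁻¹ * A * t * A := by
    rw [mul_inv_eq_iff_eq_mul]
    have := congrArg (fun g => A⁻¹ * t⁻¹ * g) h4
    simp only [mul_assoc, inv_mul_cancel_left] at this ⊢
    exact this
  calc t * (t * A * t⁻¹) * t⁻¹ = t * (A⁻¹ * t⁻¹ * A * t * A) * t⁻¹ := by rw [h5]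
    _ = _ := by group

theorem chainSubgroup_le_normalizer (h : IsTypeBChain s τ n) :
    chainSubgroup s n ≤ Subgroup.normalizer ((meridianHom s τ n).range : Set G) := by
  rw [chainSubgroup, Subgroup.closure_le]
  rintro _ ⟨j, hj, rfl⟩
  have hj : j < n := hj
  have hR : (meridianHom s τ n).range =
      Subgroup.closure (Set.range fun k : Fin (n + 1) => meridian s τ k) := by
    rw [meridianHom, FreeGroup.range_lift_eq_closure]
  have fwd : ∀ k ≤ n, s j * meridian s τ k * (s j)⁻¹ ∈ (meridianHom s τ n).range := by
    intro k hk
    rcases lt_trichotomy k j with hlt | rfl | hgt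
    · rw [(h.commute_meridian_of_lt hlt hj).eq, mul_inv_cancel_right]
      exact meridian_mem_range s τ hk
    · exact meridian_mem_range s τ (k := k + 1) hj
    · rcases Nat.lt_or_ge (j + 1) k with hlt | hge
      · rw [(h.commute_meridian_of_gt hlt hk).eq, mul_inv_cancel_right]
        exact meridian_mem_range s τ hk
      · obtain rfl : k = j + 1 := by omega
        rw [h.conj_meridian_succ hj]
        exact mul_mem (mul_mem (inv_mem (meridian_mem_range s τ hk))
          (meridian_mem_range s τ hj.le)) (meridian_mem_range s τ hk)
  have bwd : ∀ k ≤ n, (s j)⁻¹ * meridian s τ k * s j ∈ (meridianHom s τ n).range := by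
    intro k hk
    rcases lt_trichotomy k j with hlt | rfl | hgt
    · rw [mul_assoc, ← (h.commute_meridian_of_lt hlt hj).eq, inv_mul_cancel_left]
      exact meridian_mem_range s τ hk
    · have e := h.conj_meridian_succ hj
      have e' : (s k)⁻¹ * meridian s τ k * s k =
          meridian s τ k * meridian s τ (k + 1) * (meridian s τ k)⁻¹ := by
        have hm : meridian s τ (k + 1) = s k * meridian s τ k * (s k)⁻¹ := rfl
        have e1 : meridian s τ k = meridian s τ (k + 1) *
            (s k * meridian s τ (k + 1) * (s k)⁻¹) * (meridian s τ (k + 1))⁻¹ := by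
          rw [e]; group
        conv_lhs => rw [e1]
        calc _ = ((s k)⁻¹ * meridian s τ (k + 1) * s k) * meridian s τ (k + 1) *
              ((s k)⁻¹ * meridian s τ (k + 1) * s k)⁻¹ := by group
          _ = _ := by
            have : (s k)⁻¹ * meridian s τ (k + 1) * s k = meridian s τ k := by rw [hm]; group
            rw [this]
      rw [e']
      exact mul_mem (mul_mem (meridian_mem_range s τ hk) (meridian_mem_range s τ hj))
        (inv_mem (meridian_mem_range s τ hk))
    · rcases Nat.lt_or_ge (j + 1) k with hlt | hge
      · rw [mul_assoc, ← (h.commute_meridian_of_gt hlt hk).eq, inv_mul_cancel_left]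
        exact meridian_mem_range s τ hk
      · obtain rfl : k = j + 1 := by omega
        have : (s j)⁻¹ * meridian s τ (j + 1) * s j = meridian s τ j := by
          simp only [meridian]; group
        rw [this]
        exact meridian_mem_range s τ hj.le
  have conj_closed : ∀ g : G, (∀ k ≤ n, g * meridian s τ k * g⁻¹ ∈ (meridianHom s τ n).range) →
      ∀ r ∈ (meridianHom s τ n).range, g * r * g⁻¹ ∈ (meridianHom s τ n).range := by
    intro g hg r hr
    have : (meridianHom s τ n).range ≤
        (meridianHom s τ n).range.comap (MulAut.conj g).toMonoidHom := by
      conv_lhs => rw [hR]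
      rw [Subgroup.closure_le]
      rintro _ ⟨k, rfl⟩
      exact hg k (Nat.le_of_lt_succ k.2)
    exact this hr
  rw [SetLike.mem_coe, Subgroup.mem_normalizer_iff]
  intro r
  refine ⟨conj_closed _ fwd r, fun hr => ?_⟩
  have := conj_closed (s j)⁻¹ (by simpa using bwd) _ hr
  simpa [mul_assoc] using this

/-- Elements of the group generated by a chain of type `B` factor as a word in the meridians times
an element of the subgroup generated by `s 0, …, s (n - 1)`. -/
theorem exists_mul_of_mem_sup (h : IsTypeBChain s τ n) {g : G}
    (hg : g ∈ (meridianHom s τ n).range ⊔ chainSubgroup s n) :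
    ∃ w, ∃ c ∈ chainSubgroup s n, g = meridianHom s τ n w * c := by
  rw [← SetLike.mem_coe,
    Subgroup.coe_mul_of_right_le_normalizer_left _ _ h.chainSubgroup_le_normalizer] at hg
  obtain ⟨_, ⟨w, rfl⟩, c, hc, rfl⟩ := hg
  exact ⟨w, c, hc, rfl⟩

end IsTypeBChain

/-! ### Ordered products along a chain -/

/-- The product `s 0 * s 1 * ⋯ * s (k - 1)`. -/
def ascProd (s : ℕ → G) : ℕ → G
  | 0 => 1
  | k + 1 => ascProd s k * s k

/-- The product `s (k - 1) * ⋯ * s 1 * s 0`. -/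
def descProd (s : ℕ → G) : ℕ → G
  | 0 => 1
  | k + 1 => s k * descProd s k

namespace IsBraidChain

variable {s : ℕ → G} {n : ℕ}

theorem typeB (h : IsBraidChain s (n + 1)) :
    IsTypeBChain (fun i => s (i + 1)) (s 0 * s 0) n where
  braid i hi := h.braid (i + 1) (by omega)
  comm i j hij hj := h.comm (i + 1) (j + 1) (by omega) (by omega)
  comm_base i hi := by
    have h0 : Commute (s (i + 1 + 1)) (s 0) := (h.comm 0 (i + 2) (by omega) (by omega)).symm
    exact h0.mul_right h0
  four hn := by
    have hb := h.braid 0 (by omega)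
    simp only [Nat.zero_add] at hb ⊢
    generalize s 0 = a at *
    generalize s 1 = b at *
    calc b * (a * a) * b * (a * a) = b * a * (a * b * a) * a := by group
      _ = b * a * (b * a * b) * a := by rw [hb]
      _ = (b * a * b) * (a * b * a) := by group
      _ = a * b * a * (b * a * b) := by rw [hb]
      _ = a * (b * a * b) * a * b := by group
      _ = (a * a) * b * (a * a) * b := by rw [← hb]; group

theorem commute_ascProd (h : IsBraidChain s n) {k j : ℕ} (hkj : k < j) (hj : j < n) :
    Commute (s j) (ascProd s k) := by
  induction k with
  | zero => exact Commute.one_right _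
  | succ k ih => exact (ih (by omega)).mul_right (h.comm k j hkj hj).symm

theorem ascProd_mul (h : IsBraidChain s n) {k j : ℕ} (hjk : j + 1 < k) (hk : k ≤ n) :
    ascProd s k * s j = s (j + 1) * ascProd s k := by
  induction k with
  | zero => omega
  | succ k ih =>
    rcases Nat.lt_or_ge (j + 1) k with hlt | hge
    · rw [ascProd, mul_assoc, ← (h.comm j k hlt (by omega)).eq, ← mul_assoc, ih hlt (by omega),
        mul_assoc]
    · obtain rfl : k = j + 1 := by omega
      have hb := h.braid j (by omega)
      have hc := h.commute_ascProd (k := j) (j := j + 1) (by omega) (by omega)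
      simp only [ascProd, mul_assoc] at hb ⊢
      rw [hb, ← mul_assoc, ← hc.eq, mul_assoc]

theorem commute_descProd (h : IsBraidChain s n) {k j : ℕ} (hkj : k < j) (hj : j < n) :
    Commute (s j) (descProd s k) := by
  induction k with
  | zero => exact Commute.one_right _
  | succ k ih => exact (h.comm k j hkj hj).symm.mul_right (ih (by omega))

theorem descProd_mul (h : IsBraidChain s n) {k j : ℕ} (hjk : j + 1 < k) (hk : k ≤ n) :
    descProd s k * s (j + 1) = s j * descProd s k := by
  induction k with
  | zero => omega
  | succ k ih =>
    rcases Nat.lt_or_ge (j + 1) k with hlt | hge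
    · rw [descProd, mul_assoc, ih hlt (by omega), ← mul_assoc, ← mul_assoc,
        (h.comm j k hlt (by omega)).eq]
    · obtain rfl : k = j + 1 := by omega
      have hb := h.braid j (by omega)
      have hc := h.commute_descProd (k := j) (j := j + 1) (by omega) (by omega)
      simp only [descProd, mul_assoc] at hb ⊢
      rw [← hc.eq, ← mul_assoc (s j), ← mul_assoc (s (j + 1)), ← hb]
      simp only [mul_assoc]

theorem conj_descProd (h : IsBraidChain s n) {k : ℕ} (hk : k < n) :
    descProd s (k + 1) * s 0 * (descProd s (k + 1))⁻¹ =
      (descProd s k)⁻¹ * s k * descProd s k := by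
  induction k with
  | zero => simp [descProd]
  | succ k ih =>
    have hb := h.braid k hk
    have hc := h.commute_descProd (k := k) (j := k + 1) (by omega) hk
    have h1 : s (k + 1) * s k * (s (k + 1))⁻¹ = (s k)⁻¹ * s (k + 1) * s k := by
      rw [mul_inv_eq_iff_eq_mul, mul_assoc, mul_assoc, eq_inv_mul_iff_mul_eq]
      simpa only [mul_assoc] using hb
    calc descProd s (k + 1 + 1) * s 0 * (descProd s (k + 1 + 1))⁻¹
        = s (k + 1) * (descProd s (k + 1) * s 0 * (descProd s (k + 1))⁻¹) * (s (k + 1))⁻¹ := by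
          rw [descProd]; group
      _ = (s (k + 1) * (descProd s k)⁻¹) * s k * (descProd s k * (s (k + 1))⁻¹) := by
          rw [ih (by omega)]; group
      _ = (descProd s k)⁻¹ * (s (k + 1) * s k * (s (k + 1))⁻¹) * descProd s k := by
          rw [hc.inv_right.eq, hc.inv_left.symm.eq]; group
      _ = (descProd s (k + 1))⁻¹ * s (k + 1) * descProd s (k + 1) := by
          rw [h1, descProd]; group

/-- The subgroup generated by the meridians of the first strand and by the braids on the
remaining strands. -/
def firstStrandSubgroup (s : ℕ → G) (n : ℕ) : Subgroup G :=
  (meridianHom (fun i => s (i + 1)) (s 0 * s 0) n).range ⊔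
    chainSubgroup (fun i => s (i + 1)) n

theorem succ_mem_firstStrandSubgroup (s : ℕ → G) {j : ℕ} (hj : j < n) :
    s (j + 1) ∈ firstStrandSubgroup s n :=
  le_sup_right (a := (meridianHom (fun i => s (i + 1)) (s 0 * s 0) n).range)
    (mem_chainSubgroup (fun i => s (i + 1)) hj)

theorem ascProd_conj_mem (h : IsBraidChain s (n + 1)) {j : ℕ} (hj : j ≤ n) :
    ascProd s j * s j * s j * (ascProd s j)⁻¹ ∈ firstStrandSubgroup s n := by
  induction j with
  | zero =>
    refine Subgroup.mem_sup_left ?_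
    simpa [ascProd, meridian] using
      meridian_mem_range (fun i => s (i + 1)) (s 0 * s 0) (k := 0) (Nat.zero_le n)
  | succ j ih =>
    have hb := h.braid j (by omega)
    have hc := h.commute_ascProd (k := j) (j := j + 1) (by omega) (by omega)
    have h1 : s j * s (j + 1) * s (j + 1) * (s j)⁻¹ = (s (j + 1))⁻¹ * s j * s j * s (j + 1) := by
      rw [mul_inv_eq_iff_eq_mul]
      calc s j * s (j + 1) * s (j + 1)
          = (s (j + 1))⁻¹ * (s (j + 1) * s j * s (j + 1)) * s (j + 1) := by group
        _ = (s (j + 1))⁻¹ * (s j * s (j + 1) * s j) * s (j + 1) := by rw [hb]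
        _ = (s (j + 1))⁻¹ * s j * (s (j + 1) * s j * s (j + 1)) := by group
        _ = (s (j + 1))⁻¹ * s j * s j * s (j + 1) * s j := by rw [← hb]; group
    have h2 : ascProd s (j + 1) * s (j + 1) * s (j + 1) * (ascProd s (j + 1))⁻¹ =
        (s (j + 1))⁻¹ * (ascProd s j * s j * s j * (ascProd s j)⁻¹) * s (j + 1) := by
      calc _ = ascProd s j * (s j * s (j + 1) * s (j + 1) * (s j)⁻¹) * (ascProd s j)⁻¹ := by
            rw [ascProd]; group
        _ = (ascProd s j * (s (j + 1))⁻¹) * s j * s j * (s (j + 1) * (ascProd s j)⁻¹) := by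
            rw [h1]; group
        _ = _ := by rw [hc.inv_left.symm.eq, hc.inv_right.eq]; group
    have hmem := succ_mem_firstStrandSubgroup s (n := n) (j := j) (by omega)
    rw [h2]
    exact mul_mem (mul_mem (inv_mem hmem) (ih (by omega))) hmem

theorem exists_coset_of_mem (h : IsBraidChain s (n + 1)) {g : G}
    (hg : g ∈ chainSubgroup s (n + 1)) :
    ∃ k ≤ n + 1, g * (ascProd s k)⁻¹ ∈ firstStrandSubgroup s n := by
  have far : ∀ {j k}, j < n + 1 → k ≤ n + 1 → (k < j ∨ j + 1 < k) →
      ascProd s k * s j * (ascProd s k)⁻¹ ∈ firstStrandSubgroup s n := by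
    rintro j k hj hk (hkj | hjk)
    · obtain ⟨i, rfl⟩ : ∃ i, j = i + 1 := ⟨j - 1, by omega⟩
      rw [← (h.commute_ascProd hkj hj).eq, mul_inv_cancel_right]
      exact succ_mem_firstStrandSubgroup s (by omega)
    · rw [h.ascProd_mul hjk hk, mul_inv_cancel_right]
      exact succ_mem_firstStrandSubgroup s (by omega)
  have step : ∀ {x y z : G}, x * y⁻¹ ∈ firstStrandSubgroup s n → ∀ t : G,
      y * t * z⁻¹ ∈ firstStrandSubgroup s n → x * t * z⁻¹ ∈ firstStrandSubgroup s n := by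
    intro x y z hx t ht
    have := mul_mem hx ht
    rwa [show x * y⁻¹ * (y * t * z⁻¹) = x * t * z⁻¹ by group] at this
  have near : ∀ {j k : ℕ}, ¬(k < j ∨ j + 1 < k) → k = j ∨ k = j + 1 := by omega
  rw [chainSubgroup] at hg
  induction hg using Subgroup.closure_induction_right with
  | one => exact ⟨0, by omega, by simp [ascProd]⟩
  | mul_right x _ y hy ih =>
    obtain ⟨j, hj, rfl⟩ := hy
    obtain ⟨k, hk, hx⟩ := ih
    have hj : j < n + 1 := hj
    by_cases hjk : k < j ∨ j + 1 < k
    · exact ⟨k, hk, step hx _ (far hj hk hjk)⟩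
    · rcases near hjk with rfl | rfl
      · refine ⟨k + 1, by omega, step hx _ ?_⟩
        simp [ascProd]
      · refine ⟨j, by omega, step hx _ ?_⟩
        exact h.ascProd_conj_mem (by omega)
  | mul_inv_cancel x _ y hy ih =>
    obtain ⟨j, hj, rfl⟩ := hy
    obtain ⟨k, hk, hx⟩ := ih
    have hj : j < n + 1 := hj
    by_cases hjk : k < j ∨ j + 1 < k
    · refine ⟨k, hk, step hx _ ?_⟩
      have := inv_mem (far hj hk hjk)
      rwa [show (ascProd s k * s j * (ascProd s k)⁻¹)⁻¹ =
        ascProd s k * (s j)⁻¹ * (ascProd s k)⁻¹ by group] at this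
    · rcases near hjk with rfl | rfl
      · refine ⟨k + 1, by omega, step hx _ ?_⟩
        have := inv_mem (h.ascProd_conj_mem (j := k) (by omega))
        rwa [show (ascProd s k * s k * s k * (ascProd s k)⁻¹)⁻¹ =
          ascProd s k * (s k)⁻¹ * (ascProd s (k + 1))⁻¹ by rw [ascProd]; group] at this
      · refine ⟨j, by omega, step hx _ ?_⟩
        simp [ascProd]

end IsBraidChain

/-! ### Faithfulness of the Artin action -/

variable {ι : Type*}

/-- The elements `s 0, …, s (n - 1)` act on the free generators `x 0, …, x n` by the Artin
automorphisms and fix all other free generators. -/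
structure IsArtinAction (φ : G →* MulAut (FreeGroup ι)) (s : ℕ → G) (x : ℕ → ι) (n : ℕ) :
    Prop where
  inj : ∀ i j, i ≤ n → j ≤ n → x i = x j → i = j
  left : ∀ i < n, φ (s i) (of (x i)) = of (x (i + 1))
  right : ∀ i < n, φ (s i) (of (x (i + 1))) = (of (x (i + 1)))⁻¹ * of (x i) * of (x (i + 1))
  other : ∀ i < n, ∀ j, j ≠ x i → j ≠ x (i + 1) → φ (s i) (of j) = of j

open Classical in
/-- The endomorphism of a free group that sends the generator `p` to `1`. -/
noncomputable def kill (p : ι) : FreeGroup ι →* FreeGroup ι :=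
  FreeGroup.lift fun j => if j = p then 1 else of j

@[simp]
theorem kill_self (p : ι) : kill p (of p) = 1 := by simp [kill]

theorem kill_of_ne {p j : ι} (h : j ≠ p) : kill p (of j) = of j := by simp [kill, h]

namespace IsArtinAction

variable {φ : G →* MulAut (FreeGroup ι)} {s : ℕ → G} {x : ℕ → ι} {n : ℕ}

theorem fix (h : IsArtinAction φ s x n) {i k : ℕ} (hi : i < n) (hk : k ≤ n) (h1 : k ≠ i)
    (h2 : k ≠ i + 1) : φ (s i) (of (x k)) = of (x k) :=
  h.other i hi _ (fun e => h1 (h.inj k i hk hi.le e)) fun e => h2 (h.inj k (i + 1) hk hi e)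

theorem tail (h : IsArtinAction φ s x (n + 1)) :
    IsArtinAction φ (fun i => s (i + 1)) (fun i => x (i + 1)) n where
  inj i j hi hj e := by simpa using h.inj (i + 1) (j + 1) (by omega) (by omega) e
  left i hi := h.left (i + 1) (by omega)
  right i hi := h.right (i + 1) (by omega)
  other i hi := h.other (i + 1) (by omega)

theorem ne_zero (h : IsArtinAction φ s x n) {k : ℕ} (hk : k ≤ n) (h0 : k ≠ 0) : x k ≠ x 0 :=
  fun e => h0 (h.inj k 0 hk (Nat.zero_le n) e)

theorem fix_zero_of_mem (h : IsArtinAction φ s x (n + 1)) {g : G}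
    (hg : g ∈ chainSubgroup (fun i => s (i + 1)) n) : φ g (of (x 0)) = of (x 0) := by
  rw [chainSubgroup] at hg
  induction hg using Subgroup.closure_induction with
  | mem y hy =>
    obtain ⟨i, hi, rfl⟩ := hy
    have hi : i < n := hi
    exact h.fix (by omega) (by omega) (by omega) (by omega)
  | one => simp
  | mul a b _ _ ha hb => rw [map_mul, MulAut.mul_apply, hb, ha]
  | inv a _ ha => rw [map_inv, MulAut.inv_apply, MulEquiv.symm_apply_eq, ha]

theorem kill_comm_of_mem (h : IsArtinAction φ s x (n + 1)) {g : G}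
    (hg : g ∈ chainSubgroup (fun i => s (i + 1)) n) (z : FreeGroup ι) :
    kill (x 0) (φ g z) = φ g (kill (x 0) z) := by
  rw [chainSubgroup] at hg
  induction hg using Subgroup.closure_induction generalizing z with
  | mem y hy =>
    obtain ⟨i, hi, rfl⟩ := hy
    have hi : i < n := hi
    have h1 := h.ne_zero (k := i + 1) (by omega) (by omega)
    have h2 := h.ne_zero (k := i + 1 + 1) (by omega) (by omega)
    have hl := h.left (i + 1) (by omega)
    have hr := h.right (i + 1) (by omega)
    suffices (kill (x 0)).comp (φ (s (i + 1))).toMonoidHom =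
        (φ (s (i + 1))).toMonoidHom.comp (kill (x 0)) from DFunLike.congr_fun this z
    refine FreeGroup.ext_hom _ _ fun j => ?_
    simp only [MonoidHom.comp_apply, MulEquiv.toMonoidHom_eq_coe, MonoidHom.coe_coe]
    rcases eq_or_ne j (x 0) with rfl | hj0
    · rw [h.fix (by omega) (by omega) (by omega) (by omega), kill_self, map_one]
    rw [kill_of_ne hj0]
    rcases eq_or_ne j (x (i + 1)) with rfl | hj1
    · rw [hl, kill_of_ne h2]
    rcases eq_or_ne j (x (i + 1 + 1)) with rfl | hj2
    · rw [hr]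
      simp [kill_of_ne h1, kill_of_ne h2]
    · rw [h.other _ (by omega) _ hj1 hj2, kill_of_ne hj0]
  | one => simp
  | mul a b _ _ ha hb => rw [map_mul, MulAut.mul_apply, ha, hb, MulAut.mul_apply]
  | inv a _ ha =>
    rw [map_inv, MulAut.inv_apply, MulAut.inv_apply, MulEquiv.eq_symm_apply, ← ha,
      MulEquiv.apply_symm_apply]

/-- The element `a` acts trivially modulo the generator `p` and conjugates `p` by a lift
of `w`. -/
structure IsPush (φ : G →* MulAut (FreeGroup ι)) (p : ι) (a : G) (w : FreeGroup ι) : Prop where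
  kill_eq : ∀ z, kill p (φ a z) = kill p z
  exists_conj : ∃ u, φ a (of p) = u⁻¹ * of p * u ∧ kill p u = w

namespace IsPush

variable {p : ι} {a b : G} {v w : FreeGroup ι}

theorem one : IsPush φ p 1 1 := ⟨by simp, 1, by simp, by simp⟩

theorem mul (ha : IsPush φ p a v) (hb : IsPush φ p b w) : IsPush φ p (a * b) (v * w) := by
  obtain ⟨u, hu, rfl⟩ := ha.exists_conj
  obtain ⟨t, ht, rfl⟩ := hb.exists_conj
  refine ⟨fun z => by rw [map_mul, MulAut.mul_apply, ha.kill_eq, hb.kill_eq],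
    u * φ a t, ?_, by rw [map_mul, ha.kill_eq]⟩
  rw [map_mul, MulAut.mul_apply, ht]
  simp only [map_mul, map_inv, hu]
  group

theorem inv (ha : IsPush φ p a v) : IsPush φ p a⁻¹ v⁻¹ := by
  obtain ⟨u, hu, rfl⟩ := ha.exists_conj
  have hk : ∀ z, kill p (φ a⁻¹ z) = kill p z := fun z => by
    rw [← ha.kill_eq, ← MulAut.mul_apply, ← map_mul]; simp
  refine ⟨hk, (φ a⁻¹ u)⁻¹, ?_, by rw [map_inv, hk]⟩
  have e : of p = u * φ a (of p) * u⁻¹ := by rw [hu]; group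
  conv_lhs => rw [e]
  have e2 : φ a⁻¹ (φ a (of p)) = of p := by rw [← MulAut.mul_apply, ← map_mul]; simp
  rw [map_mul, map_mul, e2, map_inv (φ a⁻¹), inv_inv]

end IsPush

theorem isPush_meridian (h : IsArtinAction φ s x (n + 1)) {k : ℕ} (hk : k ≤ n) :
    IsPush φ (x 0) (meridian (fun i => s (i + 1)) (s 0 * s 0) k) (of (x (k + 1))) := by
  induction k with
  | zero =>
    have h1 := h.ne_zero (k := 1) (by omega) (by omega)
    have hl := h.left 0 (by omega)
    have hr := h.right 0 (by omega)
    simp only [Nat.zero_add] at hl hr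
    refine ⟨fun z => ?_, of (x 1), ?_, kill_of_ne h1⟩
    · suffices (kill (x 0)).comp (φ (s 0 * s 0)).toMonoidHom = kill (x 0) from
        DFunLike.congr_fun this z
      refine FreeGroup.ext_hom _ _ fun j => ?_
      simp only [MonoidHom.comp_apply, MulEquiv.toMonoidHom_eq_coe, MonoidHom.coe_coe, map_mul,
        MulAut.mul_apply]
      rcases eq_or_ne j (x 0) with rfl | hj0
      · simp [hl, hr]
      rcases eq_or_ne j (x 1) with rfl | hj1
      · simp [hl, hr, kill_of_ne h1]
      · rw [h.other 0 (by omega) j hj0 hj1, h.other 0 (by omega) j hj0 hj1]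
    · simp [meridian, hl, hr]
  | succ k ih =>
    obtain ⟨hkill, u, hu, hw⟩ := ih (by omega)
    have hmem : s (k + 1) ∈ chainSubgroup (fun i => s (i + 1)) n :=
      mem_chainSubgroup (fun i => s (i + 1)) (by omega)
    refine ⟨fun z => ?_, φ (s (k + 1)) u, ?_, ?_⟩
    · simp only [meridian, map_mul, MulAut.mul_apply]
      rw [h.kill_comm_of_mem hmem, hkill, ← h.kill_comm_of_mem hmem, ← MulAut.mul_apply,
        ← map_mul]
      simp
    · simp only [meridian, map_mul, MulAut.mul_apply]
      rw [h.fix_zero_of_mem (inv_mem hmem), hu]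
      simp only [map_mul, map_inv]
      rw [h.fix_zero_of_mem hmem]
    · rw [h.kill_comm_of_mem hmem, hw, h.left (k + 1) (by omega)]

theorem isPush_meridianHom (h : IsArtinAction φ s x (n + 1)) (w : FreeGroup (Fin (n + 1))) :
    IsPush φ (x 0) (meridianHom (fun i => s (i + 1)) (s 0 * s 0) n w)
      (FreeGroup.map (fun k : Fin (n + 1) => x (k + 1)) w) := by
  have gen : ∀ k : Fin (n + 1), IsPush φ (x 0)
      (meridianHom (fun i => s (i + 1)) (s 0 * s 0) n (of k))
      (FreeGroup.map (fun k : Fin (n + 1) => x (k + 1)) (of k)) := fun k => by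
    simpa [meridianHom] using h.isPush_meridian (Nat.le_of_lt_succ k.2)
  induction w using FreeGroup.induction_on with
  | C1 => simpa using IsPush.one
  | of k => exact gen k
  | inv_of k _ => simpa using (gen k).inv
  | mul v w hv hw => simpa using hv.mul hw

theorem kill_ascProd (h : IsArtinAction φ s x n) {k : ℕ} (hk : k ≤ n) :
    kill (x 0) (φ (ascProd s k) (of (x k))) = 1 := by
  induction k with
  | zero => simp [ascProd]
  | succ k ih =>
    simp [ascProd, h.right k hk, ih (by omega)]

theorem eq_one_of_mem (hs : IsBraidChain s n) (h : IsArtinAction φ s x n) {g : G}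
    (hg : g ∈ chainSubgroup s n) (hφ : φ g = 1) : g = 1 := by
  induction n generalizing s x g with
  | zero =>
    simpa [chainSubgroup] using hg
  | succ n ih =>
    obtain ⟨k, hk, hgk⟩ := hs.exists_coset_of_mem hg
    obtain ⟨w, c, hc, e⟩ := hs.typeB.exists_mul_of_mem_sup hgk
    have hpush := h.isPush_meridianHom w
    set a := meridianHom (fun i => s (i + 1)) (s 0 * s 0) n w
    obtain rfl : k = 0 := by
      by_contra hk0
      have e' : a * c * ascProd s k = g := by rw [← e]; group
      have h1 : kill (x 0) (φ g (of (x k))) = 1 := by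
        rw [← e', map_mul, map_mul, MulAut.mul_apply, MulAut.mul_apply, hpush.kill_eq,
          h.kill_comm_of_mem hc, h.kill_ascProd hk, map_one]
      rw [hφ, MulAut.one_apply, kill_of_ne (h.ne_zero hk hk0)] at h1
      exact FreeGroup.of_ne_one _ h1
    have e' : g = a * c := by simpa [ascProd] using e
    have hact : ∀ z, φ a (φ c z) = z := fun z => by
      rw [← MulAut.mul_apply, ← map_mul, ← e', hφ, MulAut.one_apply]
    have hc1 : c = 1 := by
      refine ih hs.typeB.toIsBraidChain h.tail hc ?_
      suffices (φ c).toMonoidHom = MonoidHom.id _ from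
        MulEquiv.ext fun z => DFunLike.congr_fun this z
      refine FreeGroup.ext_hom _ _ fun j => ?_
      change φ c (of j) = of j
      rcases eq_or_ne j (x 0) with rfl | hj
      · exact h.fix_zero_of_mem hc
      · calc φ c (of j) = kill (x 0) (φ c (of j)) := by
              rw [h.kill_comm_of_mem hc, kill_of_ne hj]
          _ = kill (x 0) (φ a (φ c (of j))) := (hpush.kill_eq _).symm
          _ = of j := by rw [hact, kill_of_ne hj]
    obtain ⟨u, hu, hw⟩ := hpush.exists_conj
    have hcu : Commute u (of (x 0)) := by
      have := hact (of (x 0))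
      rw [hc1, map_one, MulAut.one_apply, hu, mul_assoc, inv_mul_eq_iff_eq_mul] at this
      exact this.symm
    have hw1 := map_eq_one_of_commute (kill (x 0)) hcu (FreeGroup.of_ne_one _) (kill_self _)
    rw [hw] at hw1
    have hinj : Function.Injective fun k : Fin (n + 1) => x (k + 1) := fun i j hij =>
      Fin.ext (by simpa using h.inj (i + 1) (j + 1) (by omega) (by omega) hij)
    have : w = 1 := FreeGroup.map_injective hinj (by rw [hw1, map_one])
    rw [e', hc1, mul_one]
    simp only [a, this, map_one]

end IsArtinAction

/-! ### The affine chain -/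

theorem conj_descProd_mul {s : ℕ → G} {ρ : G} (hρ : ∀ i, ρ * s i * ρ⁻¹ = s (i + 1)) (k : ℕ) :
    ρ * descProd s k * ρ⁻¹ * s 0 = descProd s (k + 1) := by
  induction k with
  | zero => simp [descProd]
  | succ k ih =>
    calc ρ * descProd s (k + 1) * ρ⁻¹ * s 0
        = (ρ * s k * ρ⁻¹) * (ρ * descProd s k * ρ⁻¹ * s 0) := by rw [descProd]; group
      _ = descProd s (k + 1 + 1) := by rw [hρ, ih, ← descProd]

theorem IsBraidChain.typeB_of_rotation {s : ℕ → G} {ρ : G} {n : ℕ} (h : IsBraidChain s n)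
    (hρ : ∀ i, ρ * s i * ρ⁻¹ = s (i + 1)) (hper : s (n + 1) = s 0) :
    IsTypeBChain s (ρ * descProd s n)⁻¹ n where
  toIsBraidChain := h
  comm_base i hi := by
    refine Commute.inv_right (Eq.symm ?_)
    rw [mul_assoc, h.descProd_mul hi le_rfl, ← hρ]
    group
  four hn := by
    obtain ⟨n, rfl⟩ : ∃ k, n = k + 1 := ⟨n - 1, by omega⟩
    have h1 := h.conj_descProd (k := n) (by omega)
    have h2 := conj_descProd_mul hρ n
    have h3 := hρ n
    have h4 := hρ (n + 1)
    rw [hper] at h4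
    set D := descProd s (n + 1)
    set E := descProd s n
    have h5 : (ρ * D) * s 0 * (ρ * D)⁻¹ = (ρ * E * ρ⁻¹)⁻¹ * s (n + 1) * (ρ * E * ρ⁻¹) := by
      calc _ = ρ * (D * s 0 * D⁻¹) * ρ⁻¹ := by group
        _ = (ρ * E * ρ⁻¹)⁻¹ * (ρ * s n * ρ⁻¹) * (ρ * E * ρ⁻¹) := by rw [h1]; group
        _ = _ := by rw [h3]
    have h6 : (ρ * D)⁻¹ * s 0 * (ρ * D) = D⁻¹ * s (n + 1) * D := by
      rw [← h4]; group
    have h7 : (ρ * E * ρ⁻¹)⁻¹ = s 0 * D⁻¹ := by rw [← h2]; group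
    have key : (ρ * D) * s 0 * (ρ * D)⁻¹ * s 0 = s 0 * ((ρ * D)⁻¹ * s 0 * (ρ * D)) := by
      rw [h5, h6, mul_assoc, h2, h7]; group
    generalize ρ * D = T at *
    calc s 0 * T⁻¹ * s 0 * T⁻¹ = T⁻¹ * (T * s 0 * T⁻¹ * s 0) * T⁻¹ := by group
      _ = T⁻¹ * s 0 * T⁻¹ * s 0 := by rw [key]; group

namespace IsArtinAction

variable {φ : G →* MulAut (FreeGroup ι)} {s : ℕ → G} {x : ℕ → ι} {n : ℕ}

theorem descProd_zero (h : IsArtinAction φ s x n) {k : ℕ} (hk : k ≤ n) :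
    φ (descProd s k) (of (x 0)) = of (x k) := by
  induction k with
  | zero => simp [descProd]
  | succ k ih => rw [descProd, map_mul, MulAut.mul_apply, ih (by omega), h.left k hk]

theorem descProd_fix (h : IsArtinAction φ s x n) {k i : ℕ} (hk : k < i) (hi : i ≤ n) :
    φ (descProd s k) (of (x i)) = of (x i) := by
  induction k with
  | zero => simp [descProd]
  | succ k ih =>
    rw [descProd, map_mul, MulAut.mul_apply, ih (by omega),
      h.fix (by omega) hi (by omega) (by omega)]

theorem descProd_succ (h : IsArtinAction φ s x n) {k i : ℕ} (hi : i < k) (hk : k ≤ n) :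
    φ (descProd s k) (of (x (i + 1))) = (of (x k))⁻¹ * of (x i) * of (x k) := by
  induction k with
  | zero => omega
  | succ k ih =>
    rw [descProd, map_mul, MulAut.mul_apply]
    rcases Nat.lt_or_ge i k with hlt | hge
    · rw [ih hlt (by omega)]
      simp only [map_mul, map_inv]
      rw [h.left k hk, h.fix (i := k) (k := i) (by omega) (by omega) (by omega) (by omega)]
    · obtain rfl : i = k := by omega
      rw [h.descProd_fix (by omega) (by omega), h.right i (by omega)]

theorem fix_ascProd_of_le (h : IsArtinAction φ s x n) {i k : ℕ} (hi : i < n) (hk : k ≤ i) :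
    φ (s i) (ascProd (fun j => of (x j)) k) = ascProd (fun j => of (x j)) k := by
  induction k with
  | zero => simp [ascProd]
  | succ k ih =>
    rw [ascProd, map_mul, ih (by omega), h.fix hi (by omega) (by omega) (by omega)]

theorem fix_ascProd_of_ge (h : IsArtinAction φ s x n) {i k : ℕ} (hk : i + 2 ≤ k)
    (hkn : k ≤ n + 1) :
    φ (s i) (ascProd (fun j => of (x j)) k) = ascProd (fun j => of (x j)) k := by
  induction k, hk using Nat.le_induction with
  | base =>
    simp only [ascProd, map_mul]
    rw [h.fix_ascProd_of_le (by omega) le_rfl, h.left i (by omega), h.right i (by omega)]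
    group
  | succ k hk ih =>
    rw [ascProd, map_mul, ih (by omega), h.fix (by omega) (by omega) (by omega) (by omega)]

theorem fix_ascProd_of_mem (h : IsArtinAction φ s x n) {g : G} (hg : g ∈ chainSubgroup s n) :
    φ g (ascProd (fun j => of (x j)) (n + 1)) = ascProd (fun j => of (x j)) (n + 1) := by
  rw [chainSubgroup] at hg
  induction hg using Subgroup.closure_induction with
  | mem y hy =>
    obtain ⟨i, hi, rfl⟩ := hy
    have hi : i < n := hi
    exact h.fix_ascProd_of_ge (by omega) le_rfl
  | one => simp
  | mul a b _ _ ha hb => rw [map_mul, MulAut.mul_apply, hb, ha]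
  | inv a _ ha => rw [map_inv, MulAut.inv_apply, MulEquiv.symm_apply_eq, ha]

/-- If `τ` conjugates the free generators `x 0, …, x n` by `x 0`, then the `k`-th meridian
conjugates them by `x k`. -/
theorem meridian_apply (h : IsArtinAction φ s x n) {τ : G}
    (hτ : ∀ j ≤ n, φ τ (of (x j)) = of (x 0) * of (x j) * (of (x 0))⁻¹) {k : ℕ} (hk : k ≤ n) :
    ∀ j ≤ n, φ (meridian s τ k) (of (x j)) = of (x k) * of (x j) * (of (x k))⁻¹ := by
  induction k with
  | zero => exact hτ
  | succ k ih =>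
    let L : Subgroup (FreeGroup ι) := (φ (meridian s τ (k + 1))).toMonoidHom.eqLocus
      (MulAut.conj (of (x (k + 1)))).toMonoidHom
    have hL : ∀ j ≤ n, φ (s k) (of (x j)) ∈ L := fun j hj => by
      change φ (meridian s τ (k + 1)) (φ (s k) (of (x j))) =
        of (x (k + 1)) * φ (s k) (of (x j)) * (of (x (k + 1)))⁻¹
      rw [← MulAut.mul_apply, ← map_mul, meridian, inv_mul_cancel_right, map_mul,
        MulAut.mul_apply, ih (by omega) j hj]
      simp only [map_mul, map_inv]
      rw [h.left k hk]
    suffices ∀ j ≤ n, of (x j) ∈ L from this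
    have h1 : of (x (k + 1)) ∈ L := by
      have := hL k (by omega)
      rwa [h.left k hk] at this
    intro j hj
    by_cases hjk : j = k
    · have := hL (k + 1) hk
      rw [h.right k hk] at this
      rw [hjk]
      simpa [mul_assoc] using mul_mem (mul_mem h1 this) (inv_mem h1)
    by_cases hjk1 : j = k + 1
    · rwa [hjk1]
    · have := hL j hj
      rwa [h.fix hk hj hjk hjk1] at this

theorem meridianHom_apply (h : IsArtinAction φ s x n) {τ : G}
    (hτ : ∀ j ≤ n, φ τ (of (x j)) = of (x 0) * of (x j) * (of (x 0))⁻¹)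
    (w v : FreeGroup (Fin (n + 1))) :
    φ (meridianHom s τ n w) (FreeGroup.map (fun k : Fin (n + 1) => x k) v) =
      FreeGroup.map (fun k : Fin (n + 1) => x k) (w * v * w⁻¹) := by
  have gen : ∀ (k : Fin (n + 1)) (v : FreeGroup (Fin (n + 1))),
      φ (meridianHom s τ n (of k)) (FreeGroup.map (fun k : Fin (n + 1) => x k) v) =
      FreeGroup.map (fun k : Fin (n + 1) => x k) (of k * v * (of k)⁻¹) := fun k v => by
    suffices (φ (meridianHom s τ n (of k))).toMonoidHom.comp
        (FreeGroup.map fun k : Fin (n + 1) => x k) =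
        (FreeGroup.map fun k : Fin (n + 1) => x k).comp (MulAut.conj (of k)).toMonoidHom from
      DFunLike.congr_fun this v
    refine FreeGroup.ext_hom _ _ fun j => ?_
    simpa [meridianHom] using
      h.meridian_apply hτ (Nat.le_of_lt_succ k.2) j (Nat.le_of_lt_succ j.2)
  induction w using FreeGroup.induction_on generalizing v with
  | C1 => simp
  | of k => exact gen k v
  | inv_of k _ =>
    rw [map_inv, map_inv, MulAut.inv_apply, MulEquiv.symm_apply_eq, gen]
    congr 1
    group
  | mul a b ha hb =>
    rw [map_mul, map_mul, MulAut.mul_apply, hb, ha]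
    congr 1
    group

end IsArtinAction

theorem map_descProd_eq_one {M : Type*} [Group M] (f : G →* M) {s : ℕ → G}
    (hf : ∀ i, f (s i) = 1) (k : ℕ) : f (descProd s k) = 1 := by
  induction k with
  | zero => simp [descProd]
  | succ k ih => rw [descProd, map_mul, ih, hf, one_mul]

theorem map_ascProd {M : Type*} [Group M] (f : G →* M) (s : ℕ → G) (k : ℕ) :
    f (ascProd s k) = ascProd (fun i => f (s i)) k := by
  induction k with
  | zero => simp [ascProd]
  | succ k ih => rw [ascProd, map_mul, ih, ascProd]

theorem ascProd_const (a : G) (k : ℕ) : ascProd (fun _ => a) k = a ^ k := by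
  induction k with
  | zero => simp [ascProd]
  | succ k ih => rw [ascProd, ih, pow_succ]

theorem map_meridian {M : Type*} [CommGroup M] (f : G →* M) (s : ℕ → G) (τ : G) (k : ℕ) :
    f (meridian s τ k) = f τ := by
  induction k with
  | zero => rfl
  | succ k ih => simp [meridian, ih]

theorem mem_sup_of_rotation {s : ℕ → G} {ρ : G} {n : ℕ} (hn : 0 < n)
    (hρ : ∀ i, ρ * s i * ρ⁻¹ = s (i + 1)) {g : G} (hg : g ∈ Subgroup.closure (Set.range s)) :
    g ∈ (meridianHom s (ρ * descProd s n)⁻¹ n).range ⊔ chainSubgroup s n := by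
  set K := (meridianHom s (ρ * descProd s n)⁻¹ n).range ⊔ chainSubgroup s n
  have hs : ∀ i < n, s i ∈ K := fun i hi => Subgroup.mem_sup_right (mem_chainSubgroup s hi)
  have hD : ∀ k ≤ n, descProd s k ∈ K := by
    intro k hk
    induction k with
    | zero => exact one_mem _
    | succ k ih => exact mul_mem (hs k hk) (ih (by omega))
  have hτ : (ρ * descProd s n)⁻¹ ∈ K :=
    Subgroup.mem_sup_left (meridian_mem_range s _ (k := 0) (Nat.zero_le n))
  have hρK : ρ ∈ K := by
    simpa using mul_mem (inv_mem hτ) (inv_mem (hD n le_rfl))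
  refine (Subgroup.closure_le K).2 ?_ hg
  rintro _ ⟨i, rfl⟩
  induction i with
  | zero => exact hs 0 hn
  | succ i ih =>
    rw [← hρ]
    exact mul_mem (mul_mem hρK ih) (inv_mem hρK)

/-- Faithfulness on the subgroup generated by a cyclic chain of braid generators, in the presence
of a rotation `ρ` of infinite order modulo that subgroup. -/
theorem eq_one_of_rotation {φ : G →* MulAut (FreeGroup ι)} {s : ℕ → G} {x : ℕ → ι} {n : ℕ}
    {ρ : G} (hn : 0 < n) (hs : IsBraidChain s n) (h : IsArtinAction φ s x n)
    (hρ : ∀ i, ρ * s i * ρ⁻¹ = s (i + 1)) (hsper : s (n + 1) = s 0)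
    (hφρ : ∀ i, φ ρ (of (x i)) = of (x (i + 1))) (hxper : x (n + 1) = x 0)
    (deg : G →* Multiplicative ℤ) (hdeg : ∀ i, deg (s i) = 1)
    (hdegρ : deg ρ = Multiplicative.ofAdd 1) {g : G}
    (hg : g ∈ Subgroup.closure (Set.range s)) (hφ : φ g = 1) : g = 1 := by
  have hB := hs.typeB_of_rotation hρ hsper
  obtain ⟨w, c, hc, e⟩ := hB.exists_mul_of_mem_sup (mem_sup_of_rotation hn hρ hg)
  set τ := (ρ * descProd s n)⁻¹ with hτdef
  have hx0 : φ (ρ * descProd s n) (of (x 0)) = of (x 0) := by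
    rw [map_mul, MulAut.mul_apply, h.descProd_zero le_rfl, hφρ, hxper]
  have hτ : ∀ j ≤ n, φ τ (of (x j)) = of (x 0) * of (x j) * (of (x 0))⁻¹ := by
    intro j hj
    rw [hτdef, map_inv, MulAut.inv_apply, MulEquiv.symm_apply_eq, map_mul (φ _), map_mul (φ _),
      map_inv (φ _), hx0]
    rcases Nat.eq_zero_or_pos j with rfl | hpos
    · rw [hx0]; group
    · obtain ⟨i, rfl⟩ : ∃ i, j = i + 1 := ⟨j - 1, by omega⟩
      rw [map_mul, MulAut.mul_apply, h.descProd_succ hj le_rfl]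
      simp only [map_mul, map_inv, hφρ, hxper]
      group
  have hdegτ : deg τ = Multiplicative.ofAdd (-1) := by
    rw [hτdef, map_inv, map_mul, hdegρ, map_descProd_eq_one deg hdeg, mul_one, ofAdd_neg]
  have hdegc : deg c = 1 := by
    have : chainSubgroup s n ≤ deg.ker := by
      rw [chainSubgroup, Subgroup.closure_le]
      rintro _ ⟨i, -, rfl⟩
      exact hdeg i
    exact this hc
  have hdegg : deg g = 1 := by
    have : Subgroup.closure (Set.range s) ≤ deg.ker := by
      rw [Subgroup.closure_le]
      rintro _ ⟨i, rfl⟩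
      exact hdeg i
    exact this hg
  have hinj : Function.Injective fun k : Fin (n + 1) => x k := fun i j hij =>
    Fin.ext (h.inj i j (by omega) (by omega) hij)
  let E : FreeGroup (Fin (n + 1)) →* Multiplicative ℤ := deg.comp (meridianHom s τ n)
  have hE : ∀ k, E (of k) = Multiplicative.ofAdd (-1) := fun k => by
    simp [E, meridianHom, map_meridian, hdegτ]
  have hEw : E w = 1 := by
    have := congrArg deg e
    rw [map_mul, hdegc, mul_one, hdegg] at this
    exact this.symm
  let Δ : FreeGroup (Fin (n + 1)) := ascProd (fun j => of (Fin.ofNat (n + 1) j)) (n + 1)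
  have hEΔ : E Δ ≠ 1 := by
    simp only [Δ, map_ascProd, hE, ascProd_const, ← ofAdd_nsmul]
    intro h0
    have := Multiplicative.ofAdd.injective (h0.trans ofAdd_zero.symm)
    simp at this
    omega
  have hΔ : FreeGroup.map (fun k : Fin (n + 1) => x k) Δ =
      ascProd (fun j => of (x j)) (n + 1) := by
    have aux : ∀ k ≤ n + 1, FreeGroup.map (fun k : Fin (n + 1) => x k)
        (ascProd (fun j => of (Fin.ofNat (n + 1) j)) k) = ascProd (fun j => of (x j)) k := by
      intro k hk
      induction k with
      | zero => simp [ascProd]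
      | succ k ih =>
        rw [ascProd, map_mul, ih (by omega), ascProd, FreeGroup.map.of]
        simp [Nat.mod_eq_of_lt hk]
    exact aux _ le_rfl
  have hcomm : Commute w Δ := by
    have h1 : φ (meridianHom s τ n w) (FreeGroup.map (fun k : Fin (n + 1) => x k) Δ) =
        FreeGroup.map (fun k : Fin (n + 1) => x k) Δ := by
      conv_lhs => rw [hΔ, ← h.fix_ascProd_of_mem hc]
      rw [← MulAut.mul_apply, ← map_mul, ← e, hφ, MulAut.one_apply, hΔ]
    rw [h.meridianHom_apply hτ] at h1
    exact mul_inv_eq_iff_eq_mul.1 (FreeGroup.map_injective hinj h1)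
  have hw : w = 1 := by
    by_contra hw
    exact hEΔ (map_eq_one_of_commute E hcomm.symm hw hEw)
  have hgc : g = c := by rw [e, hw, map_one, one_mul]
  rw [hgc] at hφ ⊢
  exact h.eq_one_of_mem hs hc hφ

/-! ### The affine braid group -/

theorem affineBraidGen_braid {n : ℕ} (hn : 2 < n) (i : ZMod n) :
    affineBraidGen n i * affineBraidGen n (i + 1) * affineBraidGen n i =
      affineBraidGen n (i + 1) * affineBraidGen n i * affineBraidGen n (i + 1) := by
  have hr : braidRelWord i (i + 1) ∈ affineBraidRels n := by
    rw [affineBraidRels, if_neg (by omega)]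
    exact Or.inl ⟨i, rfl⟩
  have := PresentedGroup.one_of_mem hr
  simp only [braidRelWord, map_mul, map_inv] at this
  exact mul_inv_eq_one.1 this

theorem affineBraidGen_comm {n : ℕ} (hn : 2 < n) {i j : ZMod n} (h1 : i - j ≠ 1)
    (h2 : i - j ≠ -1) : Commute (affineBraidGen n i) (affineBraidGen n j) := by
  have hr : commRelWord i j ∈ affineBraidRels n := by
    rw [affineBraidRels, if_neg (by omega)]
    exact Or.inr ⟨i, j, h1, h2, rfl⟩
  have := PresentedGroup.one_of_mem hr
  simp only [commRelWord, map_mul, map_inv] at this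
  exact mul_inv_eq_one.1 this

/-- The endomorphism `s_i ↦ s_{i+c}` of the affine braid group. -/
def shiftHom (n : ℕ) (c : ZMod n) : AffineBraidGroup n →* AffineBraidGroup n :=
  PresentedGroup.toGroup (f := fun i => affineBraidGen n (i + c)) <| by
    intro r hr
    rw [affineBraidRels] at hr
    split_ifs at hr with hn
    · exact hr.elim
    · rcases hr with ⟨i, rfl⟩ | ⟨i, j, h1, h2, rfl⟩
      · simp only [braidRelWord, map_mul, map_inv, FreeGroup.lift_apply_of]
        rw [mul_inv_eq_one, add_right_comm]
        exact affineBraidGen_braid (by omega) _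
      · simp only [commRelWord, map_mul, map_inv, FreeGroup.lift_apply_of]
        rw [mul_inv_eq_one]
        exact affineBraidGen_comm (by omega) (by simpa using h1) (by simpa using h2)

@[simp]
theorem shiftHom_gen (n : ℕ) (c i : ZMod n) :
    shiftHom n c (affineBraidGen n i) = affineBraidGen n (i + c) :=
  PresentedGroup.toGroup.of _

theorem shiftHom_comp {n : ℕ} {c d : ZMod n} (hcd : c + d = 0) :
    (shiftHom n c).comp (shiftHom n d) = MonoidHom.id _ :=
  PresentedGroup.ext fun i => by
    change shiftHom n c (shiftHom n d (affineBraidGen n i)) = affineBraidGen n i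
    rw [shiftHom_gen, shiftHom_gen, add_assoc, add_comm d, hcd, add_zero]

/-- The rotation automorphism `s_i ↦ s_{i+1}` of the affine braid group. -/
def affineRotation (n : ℕ) : MulAut (AffineBraidGroup n) :=
  MonoidHom.toMulEquiv (shiftHom n 1) (shiftHom n (-1)) (shiftHom_comp (by simp))
    (shiftHom_comp (by simp))

theorem affineRotation_gen (n : ℕ) (i : ZMod n) :
    affineRotation n (affineBraidGen n i) = affineBraidGen n (i + 1) :=
  shiftHom_gen n 1 i

/-- The rotation automorphism `y_j ↦ y_{j+1}`, `y ↦ y` of the free group. -/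
def freeRotation (n : ℕ) : MulAut (FreeGroup (Option (ZMod n))) :=
  FreeGroup.freeGroupCongr (Equiv.optionCongr (Equiv.addRight 1))

theorem freeRotation_some (n : ℕ) (j : ZMod n) :
    freeRotation n (of (some j)) = of (some (j + 1)) := by
  simp [freeRotation]

theorem freeRotation_none (n : ℕ) : freeRotation n (of none) = of none := by
  simp [freeRotation]

theorem freeRotation_sigmaHom (n : ℕ) (i : ZMod n) (z : FreeGroup (Option (ZMod n))) :
    freeRotation n (sigmaHom n i z) = sigmaHom n (i + 1) (freeRotation n z) := by
  suffices (freeRotation n).toMonoidHom.comp (sigmaHom n i) =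
      (sigmaHom n (i + 1)).comp (freeRotation n).toMonoidHom from DFunLike.congr_fun this z
  refine FreeGroup.ext_hom _ _ fun j => ?_
  change freeRotation n (sigmaHom n i (of j)) = sigmaHom n (i + 1) (freeRotation n (of j))
  cases j with
  | none => simp [sigmaHom, sigmaMap, freeRotation_none]
  | some j =>
    simp only [sigmaHom, freeRotation_some, FreeGroup.lift_apply_of, sigmaMap,
      add_left_inj]
    split_ifs <;> simp [freeRotation_some]

theorem map_zpow_conj {B K : Type*} [Group B] [Group K] (f : B →* K) {a : MulAut B} {c : K}
    (h : ∀ b, f (a b) = c * f b * c⁻¹) (k : ℤ) (b : B) :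
    f ((a ^ k) b) = c ^ k * f b * (c ^ k)⁻¹ := by
  induction k generalizing b with
  | zero => simp
  | succ k ih =>
    rw [zpow_add_one, MulAut.mul_apply, ih, h, zpow_add_one]
    group
  | pred k ih =>
    have h' : f (a⁻¹ b) = c⁻¹ * f b * c := by
      have := h (a⁻¹ b)
      rw [MulAut.apply_inv_self] at this
      rw [this]
      group
    rw [zpow_sub_one, MulAut.mul_apply, ih, h', zpow_sub_one]
    group

theorem map_affineRotation {m : ℕ} (Φ : AffineBraidGroup m →* MulAut (FreeGroup (Option (ZMod m))))
    (hΦ : ∀ (i : ZMod m) (x : FreeGroup (Option (ZMod m))),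
      Φ (affineBraidGen m i) x = sigmaHom m i x) (b : AffineBraidGroup m) :
    Φ (affineRotation m b) = freeRotation m * Φ b * (freeRotation m)⁻¹ := by
  suffices Φ.comp (affineRotation m).toMonoidHom =
      (MulAut.conj (freeRotation m)).toMonoidHom.comp Φ from DFunLike.congr_fun this b
  refine PresentedGroup.ext fun i => ?_
  change Φ (affineRotation m (affineBraidGen m i)) =
    freeRotation m * Φ (affineBraidGen m i) * (freeRotation m)⁻¹
  rw [affineRotation_gen, eq_mul_inv_iff_mul_eq]
  refine MulEquiv.ext fun z => ?_
  rw [MulAut.mul_apply, MulAut.mul_apply, hΦ, hΦ, freeRotation_sigmaHom]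

/-- The action of the affine braid group extended by the rotation. -/
def extendedAction {m : ℕ} (Φ : AffineBraidGroup m →* MulAut (FreeGroup (Option (ZMod m))))
    (hΦ : ∀ (i : ZMod m) (x : FreeGroup (Option (ZMod m))),
      Φ (affineBraidGen m i) x = sigmaHom m i x) :
    AffineBraidGroup m ⋊[zpowersHom _ (affineRotation m)] Multiplicative ℤ →*
      MulAut (FreeGroup (Option (ZMod m))) :=
  SemidirectProduct.lift Φ (zpowersHom _ (freeRotation m)) fun k => by
    refine MonoidHom.ext fun b => ?_
    exact map_zpow_conj Φ (map_affineRotation Φ hΦ) k.toAdd b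

theorem natCast_eq_of_lt {m i j : ℕ} (hi : i < m) (hj : j < m)
    (h : (i : ZMod m) = (j : ZMod m)) : i = j := by
  rw [ZMod.natCast_eq_natCast_iff] at h
  exact h.eq_of_lt_of_lt hi hj

theorem isBraidChain_affineBraidGen (n : ℕ) :
    IsBraidChain (fun i : ℕ => affineBraidGen (n + 1) (i : ZMod (n + 1))) n where
  braid i hi := by
    simpa using affineBraidGen_braid (n := n + 1) (by omega) (i : ZMod (n + 1))
  comm i j hij hj := by
    refine affineBraidGen_comm (by omega) (fun e => ?_) fun e => ?_
    · have e' : ((i : ℕ) : ZMod (n + 1)) = ((j + 1 : ℕ) : ZMod (n + 1)) := by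
        push_cast; rw [← e]; ring
      have := natCast_eq_of_lt (by omega) (by omega) e'
      omega
    · have e' : ((i + 1 : ℕ) : ZMod (n + 1)) = ((j : ℕ) : ZMod (n + 1)) := by
        push_cast; rw [eq_neg_iff_add_eq_zero] at e
        rw [← sub_eq_zero, ← e]; ring
      have := natCast_eq_of_lt (by omega) (by omega) e'
      omega

end BraidAction

open BraidAction in
/-- For every `m ≥ 2`, the group homomorphism `B(Ã_{m−1}) → Aut(F_{m+1})` sending `s_i` to
`σ_i` for all `i ∈ ℤ/m` is injective; that is, the affine braid group `B(Ã_{m−1})` acts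
faithfully on the free group `F_{m+1}` via the automorphisms `σ_i`. -/
theorem affineBraid_acts_faithfully (m : ℕ) (hm : 2 ≤ m)
    (Φ : AffineBraidGroup m →* MulAut (FreeGroup (Option (ZMod m))))
    (hΦ : ∀ (i : ZMod m) (x : FreeGroup (Option (ZMod m))),
      Φ (affineBraidGen m i) x = sigmaHom m i x) :
    Function.Injective Φ := by
  obtain ⟨n, rfl⟩ : ∃ n, m = n + 1 := ⟨m - 1, by omega⟩
  have hA := isBraidChain_affineBraidGen n
  let G := AffineBraidGroup (n + 1) ⋊[zpowersHom _ (affineRotation (n + 1))] Multiplicative ℤ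
  let inl : AffineBraidGroup (n + 1) →* G := SemidirectProduct.inl
  let s : ℕ → G := fun i => inl (affineBraidGen (n + 1) (i : ZMod (n + 1)))
  let x : ℕ → Option (ZMod (n + 1)) := fun i => some (i : ZMod (n + 1))
  let ρ : G := SemidirectProduct.inr (Multiplicative.ofAdd 1)
  let φ : G →* MulAut (FreeGroup (Option (ZMod (n + 1)))) := extendedAction Φ hΦ
  have hφ : ∀ b, φ (inl b) = Φ b := fun b => SemidirectProduct.lift_inl _ _ _ b
  have hs : IsBraidChain s n :=
    ⟨fun i hi => by simpa only [map_mul] using congrArg inl (hA.braid i hi),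
      fun i j hij hj => (hA.comm i j hij hj).map inl⟩
  have hne : ∀ i : ZMod (n + 1), i + 1 ≠ i := fun i => by
    have : Fact (1 < n + 1) := ⟨by omega⟩
    simp
  have hact : IsArtinAction φ s x n := by
    refine ⟨fun i j hi hj e => natCast_eq_of_lt (by omega) (by omega) (Option.some.inj e),
      fun i hi => ?_, fun i hi => ?_, fun i hi j h1 h2 => ?_⟩
    · simp [s, x, hφ, hΦ, sigmaHom, sigmaMap]
    · simp [s, x, hφ, hΦ, sigmaHom, sigmaMap, hne]
    · cases j with
      | none => simp [s, hφ, hΦ, sigmaHom, sigmaMap]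
      | some j =>
        have h1 : j ≠ (i : ZMod (n + 1)) := fun e => h1 (congrArg some e)
        have h2 : j ≠ (i : ZMod (n + 1)) + 1 := fun e => h2 (by simp [x, e])
        simp [s, hφ, hΦ, sigmaHom, sigmaMap, h1, h2]
  rw [injective_iff_map_eq_one]
  intro g hg
  have hmem : inl g ∈ Subgroup.closure (Set.range s) := by
    suffices (⊤ : Subgroup (AffineBraidGroup (n + 1))) ≤
        (Subgroup.closure (Set.range s)).comap inl from this (Subgroup.mem_top g)
    rw [← PresentedGroup.closure_range_of, Subgroup.closure_le]
    rintro _ ⟨i, rfl⟩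
    refine Subgroup.subset_closure ⟨i.val, ?_⟩
    simp only [s, ZMod.natCast_val, ZMod.cast_id', id_eq]
    rfl
  have hone : inl g = 1 := by
    refine eq_one_of_rotation (φ := φ) (s := s) (x := x) (n := n) (ρ := ρ) (by omega) hs hact
      (fun i => ?_) ?_ (fun i => ?_) ?_ SemidirectProduct.rightHom (fun i => ?_) ?_ hmem
      (by rw [hφ, hg])
    · have := SemidirectProduct.inl_aut (φ := zpowersHom _ (affineRotation (n + 1)))
        (Multiplicative.ofAdd 1) (affineBraidGen (n + 1) (i : ZMod (n + 1)))
      rw [map_inv] at this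
      refine this.symm.trans (congrArg inl ?_)
      simp [affineRotation_gen]
    · have := ZMod.natCast_self (n + 1)
      simp only [s, this, Nat.cast_zero]
    · have : φ ρ = freeRotation (n + 1) := by
        refine (SemidirectProduct.lift_inr _ _ _ _).trans ?_
        simp
      rw [this, freeRotation_some]
      simp [x]
    · have := ZMod.natCast_self (n + 1)
      simp only [x, this, Nat.cast_zero]
    · exact SemidirectProduct.rightHom_inl _
    · exact SemidirectProduct.rightHom_inr _
  exact SemidirectProduct.inl_injective (hone.trans (map_one inl).symm)
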